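/- With the coordinate setup below, under the conformal transformation ḡ_{ij} = α·g_{ij} the transformed fundamental tensor satisfies, at every point of U: F̄_{kij} = (1/3)·(ḡ_{kj}θ̄_i + ḡ_{ki}θ̄_j + g̃̄_{kj}θ̄*_i + g̃̄_{ki}θ̄*_j), where θ̄_i = θ_i + (3/(2α))·Φ_i^s·∂_s α and θ̄*_i = −(1/2)·S_i^s·θ̄_s, with Φ = !![0,1,1; 1,0,1; 1,1,0] and S = !![−1,1,1; 1,−1,1; 1,1,−1]. -/

import Mathlib

open scoped BigOperators

/-- Points of ℝ³. -/
abbrev Pt := Fin 3 → ℝ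

/-- Partial derivative `∂_i f` at `p`. -/
noncomputable def pd (i : Fin 3) (f : Pt → ℝ) (p : Pt) : ℝ :=
  fderiv ℝ f p (Pi.single i 1)

/-- The circulant structure `Q` with `Q¹₂ = Q²₃ = Q³₁ = 1`. -/
def Qmat : Matrix (Fin 3) (Fin 3) ℝ := !![0,1,0; 0,0,1; 1,0,0]

/-- The metric `g_{ij}`: diagonal entries `A`, off-diagonal entries `B`. -/
def gm (A B : Pt → ℝ) (i j : Fin 3) (p : Pt) : ℝ :=
  if i = j then A p else B p

/-- The associated metric `g̃_{ij} = g_{is} Q^s_j + g_{sj} Q^s_i`. -/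
def gt (A B : Pt → ℝ) (i j : Fin 3) (p : Pt) : ℝ :=
  ∑ s, (gm A B i s p * Qmat s j + gm A B s j p * Qmat s i)

/-- Christoffel symbols `Γ^k_{ij}` of a metric `h` with (pointwise) inverse `hinv`. -/
noncomputable def Gamma (h hinv : Fin 3 → Fin 3 → Pt → ℝ) (k i j : Fin 3) (p : Pt) : ℝ :=
  (1/2) * ∑ s, hinv k s p * (pd i (h s j) p + pd j (h s i) p - pd s (h i j) p)

/-- Fundamental tensor `F_{kij} = ∂_k g̃_{ij} − Γ^s_{ki} g̃_{sj} − Γ^s_{kj} g̃_{si}`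
of the metric `h` (with inverse `hinv`) acting on `ht` (= the associated metric). -/
noncomputable def Ften (h hinv ht : Fin 3 → Fin 3 → Pt → ℝ) (k i j : Fin 3) (p : Pt) : ℝ :=
  pd k (ht i j) p - (∑ s, Gamma h hinv s k i p * ht s j p)
    - (∑ s, Gamma h hinv s k j p * ht s i p)

/-- Lee form `θ_k = g^{ij} F_{ijk}`. -/
noncomputable def theta (h hinv ht : Fin 3 → Fin 3 → Pt → ℝ) (k : Fin 3) (p : Pt) : ℝ :=
  ∑ i, ∑ j, hinv i j p * Ften h hinv ht i j k p

/-- Lee form `θ*_k = g^{ij} Q^s_j F_{isk}`. -/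
noncomputable def thetaStar (h hinv ht : Fin 3 → Fin 3 → Pt → ℝ) (k : Fin 3) (p : Pt) : ℝ :=
  ∑ i, ∑ j, ∑ s, hinv i j p * Qmat s j * Ften h hinv ht i s k p

/-- The constant matrix `Φ = !![0,1,1; 1,0,1; 1,1,0]`. -/
def PhiMat : Matrix (Fin 3) (Fin 3) ℝ := !![0,1,1; 1,0,1; 1,1,0]

/-- The constant matrix `S = !![−1,1,1; 1,−1,1; 1,1,−1]`. -/
def Smat : Matrix (Fin 3) (Fin 3) ℝ := !![-1,1,1; 1,-1,1; 1,1,-1]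

/-!
Since `Q + Qᵀ = Φ` and `Φ + 1` is the all-ones matrix, the associated metric of a metric `g` all of
whose rows sum to `e` is `e - g`. Metric compatibility then reduces `F_{kij}` to
`∂_k e - e ∑ₛ (Γ^s_{ki} + Γ^s_{kj})`, and since `e ∑ₛ Γ^s_{ki}` is the sum over `t` of the lowered
symbols `g_{ts} Γ^s_{ki}`, this is `½ (D g_{ki} + D g_{kj} - ∂_i e - ∂_j e)` with `D = ∑ₛ ∂ₛ`.
Contracting with `g⁻¹`, whose rows sum to `e⁻¹`, gives the Lee form, which depends on the conformal
factor only through its logarithmic derivative. When all off-diagonal entries agree, `F` is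
determined by its Lee form, and `ḡ` is a metric of the same shape.
-/

section PartialDerivatives

variable {f g : Pt → ℝ} {p : Pt}

/-- The derivative `∑ₛ ∂ₛ f` of `f` along the constant field `(1, 1, 1)`; it arises from contracting
`∂` with the all-ones matrix `Φ + 1`. -/
noncomputable def pdSum (f : Pt → ℝ) (p : Pt) : ℝ := ∑ s, pd s f p

lemma pd_add (hf : DifferentiableAt ℝ f p) (hg : DifferentiableAt ℝ g p) (k : Fin 3) :
    pd k (fun q => f q + g q) p = pd k f p + pd k g p := by
  simp [pd, fderiv_fun_add hf hg]

lemma pd_sub (hf : DifferentiableAt ℝ f p) (hg : DifferentiableAt ℝ g p) (k : Fin 3) :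
    pd k (fun q => f q - g q) p = pd k f p - pd k g p := by
  simp [pd, fderiv_fun_sub hf hg]

lemma pd_const_mul (hf : DifferentiableAt ℝ f p) (c : ℝ) (k : Fin 3) :
    pd k (fun q => c * f q) p = c * pd k f p := by
  simp [pd, fderiv_const_mul hf]

lemma pd_mul (hf : DifferentiableAt ℝ f p) (hg : DifferentiableAt ℝ g p) (k : Fin 3) :
    pd k (fun q => f q * g q) p = f p * pd k g p + g p * pd k f p := by
  simp [pd, fderiv_fun_mul hf hg]

lemma pdSum_mul (hf : DifferentiableAt ℝ f p) (hg : DifferentiableAt ℝ g p) :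
    pdSum (fun q => f q * g q) p = f p * pdSum g p + g p * pdSum f p := by
  simp only [pdSum, pd_mul hf hg, Finset.sum_add_distrib, Finset.mul_sum]

end PartialDerivatives

lemma PhiMat_apply (i j : Fin 3) : PhiMat i j = 1 - if i = j then 1 else 0 := by
  fin_cases i <;> fin_cases j <;> simp [PhiMat]

lemma Smat_apply (i j : Fin 3) : Smat i j = 1 - if i = j then 2 else 0 := by
  fin_cases i <;> fin_cases j <;> norm_num [Smat]

lemma sum_PhiMat_mul (v : Fin 3 → ℝ) (i : Fin 3) : ∑ s, PhiMat i s * v s = ∑ s, v s - v i := by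
  simp [PhiMat_apply, sub_mul]

lemma sum_Smat_mul (v : Fin 3 → ℝ) (i : Fin 3) : ∑ s, Smat i s * v s = ∑ s, v s - 2 * v i := by
  simp [Smat_apply, sub_mul]

/-- `hinv` is a right, hence two-sided, inverse of the matrix field `h` at the point `p`. -/
def IsInverseAt (h hinv : Fin 3 → Fin 3 → Pt → ℝ) (p : Pt) : Prop :=
  ∀ i j, (∑ s, h i s p * hinv s j p) = if i = j then (1 : ℝ) else 0

/-- A symmetric matrix field `h`, each of whose rows sums to the function `e`; equivalently,
`h` commutes with the all-ones matrix, acting on it as `e`. -/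
structure SymmConstRowSum (h : Fin 3 → Fin 3 → Pt → ℝ) (e : Pt → ℝ) : Prop where
  symm : ∀ i j, h i j = h j i
  sum_row : ∀ i q, ∑ s, h i s q = e q

/-- The associated metric `h (Q + Qᵀ)` of a metric `h` with row sums `e`: as `Q + Qᵀ + 1` is the
all-ones matrix, it is `e - h` entrywise. -/
def rowSumAssociated (e : Pt → ℝ) (h : Fin 3 → Fin 3 → Pt → ℝ) (i j : Fin 3) (q : Pt) : ℝ :=
  e q - h i j q

/-- Christoffel symbols of the first kind, `Γ_{k,ij}`. -/
noncomputable def GammaFirst (h : Fin 3 → Fin 3 → Pt → ℝ) (k i j : Fin 3) (p : Pt) : ℝ :=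
  (1 / 2) * (pd i (h k j) p + pd j (h k i) p - pd k (h i j) p)

/-- The contraction of `hinv` with `∑ₛ ∂ₛ h`. By Jacobi's formula it is the derivative of
`log |det h|` along `(1, 1, 1)` when `hinv` is the inverse of the symmetric `h`. -/
noncomputable def logDetDeriv (h hinv : Fin 3 → Fin 3 → Pt → ℝ) (p : Pt) : ℝ :=
  ∑ i, ∑ j, hinv i j p * pdSum (h i j) p

section ConstantRowSums

variable {h hinv : Fin 3 → Fin 3 → Pt → ℝ} {e : Pt → ℝ} {p : Pt}

namespace IsInverseAt

lemma mul_eq_one (hi : IsInverseAt h hinv p) :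
    Matrix.of (fun i j => h i j p) * Matrix.of (fun i j => hinv i j p) = 1 := by
  ext i j
  simpa [Matrix.mul_apply, Matrix.one_apply] using hi i j

lemma unique {hinv' : Fin 3 → Fin 3 → Pt → ℝ} (hi : IsInverseAt h hinv p)
    (hi' : IsInverseAt h hinv' p) (i j : Fin 3) : hinv i j p = hinv' i j p :=
  Matrix.ext_iff.mpr
    (left_inv_eq_right_inv (mul_eq_one_comm.mp hi.mul_eq_one) hi'.mul_eq_one) i j

lemma symm (hi : IsInverseAt h hinv p) (hs : ∀ i j, h i j = h j i) (i j : Fin 3) :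
    hinv i j p = hinv j i p := by
  refine hi.unique (hinv' := fun i j => hinv j i) (fun i j => ?_) i j
  have hleft := Matrix.ext_iff.mpr (mul_eq_one_comm.mp hi.mul_eq_one) j i
  simpa [Matrix.mul_apply, Matrix.one_apply, hs i, mul_comm, eq_comm] using hleft

lemma sum_sum_inv_mul (hi : IsInverseAt h hinv p) (hs : ∀ i j, h i j = h j i) :
    ∑ i, ∑ j, hinv i j p * h i j p = 3 := by
  have hrow : ∀ i, ∑ j, hinv i j p * h i j p = 1 := fun i => by
    simpa [hi.symm hs i, mul_comm] using hi i i
  simp [hrow]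

lemma conformalFactor_ne_zero {α : Pt → ℝ}
    (hi : IsInverseAt (fun i j q => α q * h i j q) hinv p) : α p ≠ 0 := by
  intro hα
  simpa [hα] using hi 0 0

lemma of_conformal {α : Pt → ℝ} (hi : IsInverseAt (fun i j q => α q * h i j q) hinv p) :
    IsInverseAt h (fun i j q => α q * hinv i j q) p := fun i j => by
  simpa only [mul_assoc, mul_left_comm] using hi i j

end IsInverseAt

lemma Gamma_eq_sum_GammaFirst (k i j : Fin 3) :
    Gamma h hinv k i j p = ∑ s, hinv k s p * GammaFirst h s i j p := by
  simp only [Gamma, GammaFirst, Finset.mul_sum, mul_left_comm]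

lemma sum_Gamma_mul (hs : ∀ i j, h i j = h j i) (hi : IsInverseAt h hinv p) (k i j : Fin 3) :
    ∑ s, Gamma h hinv s i j p * h s k p = GammaFirst h k i j p := by
  calc ∑ s, Gamma h hinv s i j p * h s k p
      = ∑ t, (∑ s, h k s p * hinv s t p) * GammaFirst h t i j p := by
        simp only [Gamma_eq_sum_GammaFirst, Finset.sum_mul]
        rw [Finset.sum_comm]
        refine Finset.sum_congr rfl fun t _ => Finset.sum_congr rfl fun s _ => ?_
        rw [hs s k]
        ring
    _ = GammaFirst h k i j p := by simp [hi k]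

lemma GammaFirst_add_GammaFirst (hs : ∀ i j, h i j = h j i) (k i j : Fin 3) :
    GammaFirst h j k i p + GammaFirst h i k j p = pd k (h i j) p := by
  simp only [GammaFirst, hs j i, hs j k, hs k i]
  ring

namespace SymmConstRowSum

lemma sum_col (hr : SymmConstRowSum h e) (j : Fin 3) (q : Pt) : ∑ i, h i j q = e q := by
  simp only [hr.symm _ j, hr.sum_row]

lemma differentiableAt (hr : SymmConstRowSum h e)
    (hd : ∀ i j, DifferentiableAt ℝ (h i j) p) : DifferentiableAt ℝ e p := by
  rw [← funext (hr.sum_row 0)]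
  exact DifferentiableAt.fun_sum fun s _ => hd 0 s

lemma sum_pd (hr : SymmConstRowSum h e) (hd : ∀ i j, DifferentiableAt ℝ (h i j) p)
    (j k : Fin 3) : ∑ i, pd k (h i j) p = pd k e p := by
  rw [← funext (hr.sum_col j)]
  simp [pd, fderiv_fun_sum fun i _ => hd i j]

lemma sum_pdSum (hr : SymmConstRowSum h e) (hd : ∀ i j, DifferentiableAt ℝ (h i j) p)
    (k : Fin 3) : ∑ i, pdSum (h i k) p = pdSum e p := by
  simp only [pdSum]
  rw [Finset.sum_comm]
  simp only [hr.sum_pd hd]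

lemma rowSum_mul_sum_inv (hr : SymmConstRowSum h e) (hi : IsInverseAt h hinv p) (j : Fin 3) :
    e p * ∑ s, hinv s j p = 1 := by
  calc e p * ∑ s, hinv s j p
      = ∑ s, (∑ i, h i s p) * hinv s j p := by
        simp only [hr.sum_col, Finset.mul_sum]
    _ = ∑ i, ∑ s, h i s p * hinv s j p := by
        simp only [Finset.sum_mul]
        exact Finset.sum_comm
    _ = 1 := by simp [hi _ j]

lemma rowSum_ne_zero (hr : SymmConstRowSum h e) (hi : IsInverseAt h hinv p) : e p ≠ 0 :=
  left_ne_zero_of_mul_eq_one (hr.rowSum_mul_sum_inv hi 0)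

lemma sum_inv_left (hr : SymmConstRowSum h e) (hi : IsInverseAt h hinv p) (j : Fin 3) :
    ∑ i, hinv i j p = (e p)⁻¹ :=
  eq_inv_of_mul_eq_one_right (hr.rowSum_mul_sum_inv hi j)

lemma sum_inv_right (hr : SymmConstRowSum h e) (hi : IsInverseAt h hinv p) (i : Fin 3) :
    ∑ j, hinv i j p = (e p)⁻¹ := by
  simp only [hi.symm hr.symm i, hr.sum_inv_left hi]

lemma sum_GammaFirst (hr : SymmConstRowSum h e) (hd : ∀ i j, DifferentiableAt ℝ (h i j) p)
    (i j : Fin 3) :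
    ∑ k, GammaFirst h k i j p = (1 / 2) * (pd i e p + pd j e p - pdSum (h i j) p) := by
  simp only [GammaFirst, ← Finset.mul_sum, Finset.sum_sub_distrib, Finset.sum_add_distrib,
    hr.sum_pd hd, pdSum]

lemma rowSum_mul_sum_Gamma (hr : SymmConstRowSum h e) (hi : IsInverseAt h hinv p)
    (hd : ∀ i j, DifferentiableAt ℝ (h i j) p) (i j : Fin 3) :
    ∑ s, Gamma h hinv s i j p * e p = (1 / 2) * (pd i e p + pd j e p - pdSum (h i j) p) := by
  calc ∑ s, Gamma h hinv s i j p * e p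
      = ∑ k, ∑ s, Gamma h hinv s i j p * h s k p := by
        rw [Finset.sum_comm]
        simp only [← Finset.mul_sum, hr.sum_row]
    _ = (1 / 2) * (pd i e p + pd j e p - pdSum (h i j) p) := by
        simp only [sum_Gamma_mul hr.symm hi, hr.sum_GammaFirst hd]

lemma Ften_eq (hr : SymmConstRowSum h e) (hi : IsInverseAt h hinv p)
    (hd : ∀ i j, DifferentiableAt ℝ (h i j) p) (k i j : Fin 3) :
    Ften h hinv (rowSumAssociated e h) k i j p =
      (1 / 2) * (pdSum (h k i) p + pdSum (h k j) p - pd i e p - pd j e p) := by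
  have hpd : pd k (rowSumAssociated e h i j) p = pd k e p - pd k (h i j) p :=
    pd_sub (hr.differentiableAt hd) (hd i j) k
  simp only [Ften, hpd, rowSumAssociated, mul_sub, Finset.sum_sub_distrib,
    hr.rowSum_mul_sum_Gamma hi hd, sum_Gamma_mul hr.symm hi]
  linarith [GammaFirst_add_GammaFirst (p := p) hr.symm k i j]

lemma theta_eq (hr : SymmConstRowSum h e) (hi : IsInverseAt h hinv p)
    (hd : ∀ i j, DifferentiableAt ℝ (h i j) p) (k : Fin 3) :
    theta h hinv (rowSumAssociated e h) k p =
      (1 / 2) * logDetDeriv h hinv p - (3 / 2) * pd k e p / e p := by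
  have hD : ∑ i, ∑ j, hinv i j p * pdSum (h i k) p = (e p)⁻¹ * pdSum e p := by
    simp only [← Finset.sum_mul, hr.sum_inv_right hi, ← Finset.mul_sum, hr.sum_pdSum hd]
  have hpd : ∑ i, ∑ j, hinv i j p * pd j e p = (e p)⁻¹ * pdSum e p := by
    rw [Finset.sum_comm]
    simp only [← Finset.sum_mul, hr.sum_inv_left hi, ← Finset.mul_sum, pdSum]
  have hpdk : ∑ i, ∑ j, hinv i j p * pd k e p = 3 * pd k e p / e p := by
    simp only [← Finset.sum_mul, hr.sum_inv_right hi, Finset.sum_const, Finset.card_univ,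
      Fintype.card_fin, nsmul_eq_mul, Nat.cast_ofNat]
    ring
  simp only [theta, hr.Ften_eq hi hd, mul_left_comm _ (1 / 2 : ℝ), ← Finset.mul_sum, mul_sub,
    mul_add, Finset.sum_add_distrib, Finset.sum_sub_distrib, hD, hpd, hpdk, logDetDeriv]
  ring

lemma conformal (hr : SymmConstRowSum h e) (α : Pt → ℝ) :
    SymmConstRowSum (fun i j q => α q * h i j q) (fun q => α q * e q) where
  symm i j := by simp only [hr.symm i j]
  sum_row i q := by rw [← Finset.mul_sum, hr.sum_row]

lemma logDetDeriv_conformal {α : Pt → ℝ} {hinvbar : Fin 3 → Fin 3 → Pt → ℝ}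
    (hr : SymmConstRowSum h e) (hi : IsInverseAt h hinv p)
    (hibar : IsInverseAt (fun i j q => α q * h i j q) hinvbar p)
    (hd : ∀ i j, DifferentiableAt ℝ (h i j) p) (hα : DifferentiableAt ℝ α p) :
    logDetDeriv (fun i j q => α q * h i j q) hinvbar p =
      logDetDeriv h hinv p + 3 * pdSum α p / α p := by
  have hα0 := hibar.conformalFactor_ne_zero
  have hinvbar_eq : ∀ i j, hinvbar i j p = hinv i j p / α p := fun i j => by
    rw [hi.unique hibar.of_conformal, mul_div_cancel_left₀ _ hα0]
  have hterm : ∀ i j, hinvbar i j p * pdSum (fun q => α q * h i j q) p =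
      hinv i j p * pdSum (h i j) p + hinv i j p * h i j p * (pdSum α p / α p) := fun i j => by
    rw [hinvbar_eq, pdSum_mul hα (hd i j)]
    field_simp
  simp only [logDetDeriv, hterm, Finset.sum_add_distrib, ← Finset.sum_mul,
    hi.sum_sum_inv_mul hr.symm, mul_div_assoc]

lemma theta_conformal {α : Pt → ℝ} {hinvbar : Fin 3 → Fin 3 → Pt → ℝ}
    (hr : SymmConstRowSum h e) (hi : IsInverseAt h hinv p)
    (hibar : IsInverseAt (fun i j q => α q * h i j q) hinvbar p)
    (hd : ∀ i j, DifferentiableAt ℝ (h i j) p) (hα : DifferentiableAt ℝ α p) (k : Fin 3) :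
    theta (fun i j q => α q * h i j q) hinvbar (fun i j q => α q * rowSumAssociated e h i j q) k p =
      theta h hinv (rowSumAssociated e h) k p
        + (3 / (2 * α p)) * ∑ s, PhiMat k s * pd s α p := by
  have hα0 := hibar.conformalFactor_ne_zero
  have he0 := hr.rowSum_ne_zero hi
  have hassoc : (fun i j q => α q * rowSumAssociated e h i j q) =
      rowSumAssociated (fun q => α q * e q) (fun i j q => α q * h i j q) := by
    funext i j q
    exact mul_sub _ _ _
  rw [hassoc, (hr.conformal α).theta_eq hibar (fun i j => hα.fun_mul (hd i j)), hr.theta_eq hi hd,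
    hr.logDetDeriv_conformal hi hibar hd hα, pd_mul hα (hr.differentiableAt hd),
    sum_PhiMat_mul, ← pdSum]
  field_simp
  ring

end SymmConstRowSum

end ConstantRowSums

section Circulant

variable {A B : Pt → ℝ} {ginv : Fin 3 → Fin 3 → Pt → ℝ} {p : Pt}

lemma gm_apply (A B : Pt → ℝ) (i j : Fin 3) (q : Pt) :
    gm A B i j q = B q + if i = j then A q - B q else 0 := by
  simp only [gm]
  split_ifs <;> ring

lemma gm_symmConstRowSum (A B : Pt → ℝ) :
    SymmConstRowSum (gm A B) (fun q => A q + 2 * B q) where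
  symm i j := by
    funext q
    simp only [gm, eq_comm]
  sum_row i q := by
    simp only [gm_apply, Finset.sum_add_distrib, Finset.sum_const, Finset.card_univ,
      Fintype.card_fin, nsmul_eq_mul, Nat.cast_ofNat, Finset.sum_ite_eq, Finset.mem_univ, if_true]
    ring

lemma gt_eq_rowSumAssociated (A B : Pt → ℝ) :
    gt A B = rowSumAssociated (fun q => A q + 2 * B q) (gm A B) := by
  funext i j q
  fin_cases i <;> fin_cases j <;>
    simp [gt, gm, Qmat, rowSumAssociated, Fin.sum_univ_three] <;> ring

lemma gm_eq_ite (A B : Pt → ℝ) (i j : Fin 3) : gm A B i j = if i = j then A else B := by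
  funext q
  simp only [gm]
  split_ifs <;> rfl

lemma gm_conformal (α A B : Pt → ℝ) :
    gm (fun q => α q * A q) (fun q => α q * B q) = fun i j q => α q * gm A B i j q := by
  funext i j q
  simp only [gm, mul_ite]

lemma gt_conformal (α A B : Pt → ℝ) :
    gt (fun q => α q * A q) (fun q => α q * B q) = fun i j q => α q * gt A B i j q := by
  funext i j q
  simp only [gt, gm_conformal, mul_assoc, mul_add, Finset.mul_sum]

lemma differentiableAt_gm (hA : DifferentiableAt ℝ A p) (hB : DifferentiableAt ℝ B p)
    (i j : Fin 3) : DifferentiableAt ℝ (gm A B i j) p := by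
  rw [gm_eq_ite]
  split_ifs <;> assumption

lemma pdSum_gm (i j : Fin 3) :
    pdSum (gm A B i j) p = pdSum B p + if i = j then pdSum A p - pdSum B p else 0 := by
  rw [gm_eq_ite]
  split_ifs <;> ring

lemma pd_gm_rowSum (hA : DifferentiableAt ℝ A p) (hB : DifferentiableAt ℝ B p) (k : Fin 3) :
    pd k (fun q => A q + 2 * B q) p = pd k A p + 2 * pd k B p := by
  rw [pd_add hA (hB.const_mul 2), pd_const_mul hB]

lemma sub_mul_gm_inv (hi : IsInverseAt (gm A B) ginv p) (i j : Fin 3) :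
    (A p - B p) * ginv i j p = (if i = j then 1 else 0) - B p * (A p + 2 * B p)⁻¹ := by
  rw [← hi i j, ← (gm_symmConstRowSum A B).sum_inv_left hi j]
  simp [gm_apply, add_mul, Finset.sum_add_distrib, Finset.mul_sum]

lemma gm_sub_ne_zero (hi : IsInverseAt (gm A B) ginv p) : A p - B p ≠ 0 := by
  have hdiff : (A p - B p) * (ginv 0 0 p - ginv 1 0 p) = 1 := by
    rw [mul_sub, sub_mul_gm_inv hi, sub_mul_gm_inv hi]
    simp
  exact left_ne_zero_of_mul_eq_one hdiff

lemma logDetDeriv_gm (hi : IsInverseAt (gm A B) ginv p) :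
    logDetDeriv (gm A B) ginv p =
      2 * (pdSum A p - pdSum B p) / (A p - B p)
        + (pdSum A p + 2 * pdSum B p) / (A p + 2 * B p) := by
  have hr := gm_symmConstRowSum A B
  have hf0 := gm_sub_ne_zero hi
  have he0 : A p + 2 * B p ≠ 0 := hr.rowSum_ne_zero hi
  have hdiag : ∀ i, ginv i i p = (1 - B p * (A p + 2 * B p)⁻¹) / (A p - B p) := fun i =>
    eq_div_of_mul_eq hf0 (by simpa [mul_comm] using sub_mul_gm_inv hi i i)
  simp only [logDetDeriv, pdSum_gm, mul_add, mul_ite, mul_zero, Finset.sum_add_distrib,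
    ← Finset.sum_mul, hr.sum_inv_right hi, Finset.sum_ite_eq, Finset.mem_univ, if_true, hdiag,
    Finset.sum_const, Finset.card_univ, Fintype.card_fin, nsmul_eq_mul, Nat.cast_ofNat]
  field_simp
  ring

lemma theta_gm (hA : DifferentiableAt ℝ A p) (hB : DifferentiableAt ℝ B p)
    (hi : IsInverseAt (gm A B) ginv p) (k : Fin 3) :
    theta (gm A B) ginv (gt A B) k p =
      (pdSum A p - pdSum B p) / (A p - B p)
        + (1 / 2) * (pdSum A p + 2 * pdSum B p) / (A p + 2 * B p)
        - (3 / 2) * (pd k A p + 2 * pd k B p) / (A p + 2 * B p) := by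
  rw [gt_eq_rowSumAssociated, (gm_symmConstRowSum A B).theta_eq hi (differentiableAt_gm hA hB),
    logDetDeriv_gm hi, pd_gm_rowSum hA hB]
  ring

lemma neg_half_sum_Smat_mul_theta_gm (hA : DifferentiableAt ℝ A p) (hB : DifferentiableAt ℝ B p)
    (hi : IsInverseAt (gm A B) ginv p) (i : Fin 3) :
    -(1 / 2) * ∑ s, Smat i s * theta (gm A B) ginv (gt A B) s p =
      theta (gm A B) ginv (gt A B) i p
        - (3 / 2) * ((pdSum A p - pdSum B p) / (A p - B p)) := by
  have hsum : ∑ s, theta (gm A B) ginv (gt A B) s p =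
      3 * ((pdSum A p - pdSum B p) / (A p - B p)) := by
    simp only [theta_gm hA hB hi, pdSum, Fin.sum_univ_three]
    ring
  rw [sum_Smat_mul, hsum]
  ring

theorem Ften_gm_eq_theta (hA : DifferentiableAt ℝ A p) (hB : DifferentiableAt ℝ B p)
    (hi : IsInverseAt (gm A B) ginv p) (k i j : Fin 3) :
    Ften (gm A B) ginv (gt A B) k i j p =
      (1 / 3) * (gm A B k j p * theta (gm A B) ginv (gt A B) i p
        + gm A B k i p * theta (gm A B) ginv (gt A B) j p
        + gt A B k j p * (-(1 / 2) * ∑ s, Smat i s * theta (gm A B) ginv (gt A B) s p)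
        + gt A B k i p * (-(1 / 2) * ∑ s, Smat j s * theta (gm A B) ginv (gt A B) s p)) := by
  have hr := gm_symmConstRowSum A B
  have hf0 := gm_sub_ne_zero hi
  have he0 : A p + 2 * B p ≠ 0 := hr.rowSum_ne_zero hi
  have hF : Ften (gm A B) ginv (gt A B) k i j p =
      (1 / 2) * (pdSum (gm A B k i) p + pdSum (gm A B k j) p
        - (pd i A p + 2 * pd i B p) - (pd j A p + 2 * pd j B p)) := by
    rw [gt_eq_rowSumAssociated, hr.Ften_eq hi (differentiableAt_gm hA hB),
      pd_gm_rowSum hA hB, pd_gm_rowSum hA hB]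
  have hgt : ∀ l, gt A B k l p = A p + 2 * B p - gm A B k l p := fun l => by
    rw [gt_eq_rowSumAssociated, rowSumAssociated]
  obtain ⟨dlog, hdlog⟩ : ∃ d, d = (pdSum A p - pdSum B p) / (A p - B p) := ⟨_, rfl⟩
  have hsub : (A p - B p) * dlog = pdSum A p - pdSum B p := by
    rw [hdlog, mul_div_cancel₀ _ hf0]
  have hgm : ∀ l, gm A B k l p * dlog =
      B p * dlog + (pdSum (gm A B k l) p - pdSum B p) := fun l => by
    rw [pdSum_gm, gm]
    split_ifs
    · linear_combination hsub
    · ring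
  have htheta : ∀ l, (A p + 2 * B p) * theta (gm A B) ginv (gt A B) l p =
      (A p + 2 * B p) * dlog + (1 / 2) * (pdSum A p + 2 * pdSum B p)
        - (3 / 2) * (pd l A p + 2 * pd l B p) := fun l => by
    rw [theta_gm hA hB hi, ← hdlog]
    field_simp
  simp only [hF, hgt, neg_half_sum_Smat_mul_theta_gm hA hB hi, ← hdlog]
  linear_combination -(1 / 3) * htheta i - (1 / 3) * htheta j - (1 / 2) * hgm i - (1 / 2) * hgm j
    + (1 / 3) * hsub

end Circulant

theorem conformal_fundamental_tensor_identity_general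
    {A B α : Pt → ℝ} {p : Pt} (hA : DifferentiableAt ℝ A p) (hB : DifferentiableAt ℝ B p)
    (hα : DifferentiableAt ℝ α p)
    {ginv gbar gtbar ginvbar : Fin 3 → Fin 3 → Pt → ℝ} {θbar θbarStar : Fin 3 → Pt → ℝ}
    (hginv : IsInverseAt (gm A B) ginv p)
    (hgbar : ∀ i j q, gbar i j q = α q * gm A B i j q)
    (hgtbar : ∀ i j q, gtbar i j q = α q * gt A B i j q)
    (hginvbar : IsInverseAt gbar ginvbar p)
    (hθbar : ∀ i, θbar i p = theta (gm A B) ginv (gt A B) i p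
      + (3 / (2 * α p)) * ∑ s, PhiMat i s * pd s α p)
    (hθbarStar : ∀ i, θbarStar i p = -(1 / 2) * ∑ s, Smat i s * θbar s p) (i j k : Fin 3) :
    Ften gbar ginvbar gtbar k i j p =
      (1 / 3) * (gbar k j p * θbar i p + gbar k i p * θbar j p
        + gtbar k j p * θbarStar i p + gtbar k i p * θbarStar j p) := by
  obtain rfl : gbar = fun i j q => α q * gm A B i j q := funext₃ hgbar
  obtain rfl : gtbar = fun i j q => α q * gt A B i j q := funext₃ hgtbar
  have hLee : ∀ l, θbar l p = theta (fun i j q => α q * gm A B i j q) ginvbar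
      (fun i j q => α q * gt A B i j q) l p := fun l => by
    rw [hθbar, gt_eq_rowSumAssociated]
    exact ((gm_symmConstRowSum A B).theta_conformal hginv hginvbar
      (differentiableAt_gm hA hB) hα l).symm
  simpa only [hθbarStar, hLee, gm_conformal, gt_conformal] using
    Ften_gm_eq_theta (hα.fun_mul hA) (hα.fun_mul hB) (by rwa [gm_conformal]) k i j

/-- under the conformal transformation `ḡ = α g`, the transformed
fundamental tensor satisfies
`F̄_{kij} = (1/3)(ḡ_{kj}θ̄_i + ḡ_{ki}θ̄_j + g̃̄_{kj}θ̄*_i + g̃̄_{ki}θ̄*_j)`, where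
`θ̄_i = θ_i + (3/(2α)) Φ_i^s ∂_s α` and `θ̄*_i = −(1/2) S_i^s θ̄_s`. -/
theorem conformal_fundamental_tensor_identity
    (U : Set Pt) (hU : IsOpen U) (A B : Pt → ℝ)
    (hA : ContDiffOn ℝ (⊤ : ℕ∞) A U) (hB : ContDiffOn ℝ (⊤ : ℕ∞) B U)
    (hpos : ∀ p ∈ U, 0 < B p ∧ B p < A p)
    (ginv : Fin 3 → Fin 3 → Pt → ℝ)
    (hginv : ∀ p ∈ U, ∀ i j, (∑ s, gm A B i s p * ginv s j p) = if i = j then (1:ℝ) else 0)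
    (α : Pt → ℝ) (hα : ContDiffOn ℝ (⊤ : ℕ∞) α U) (hαpos : ∀ p ∈ U, 0 < α p)
    -- the conformal metric ḡ_{ij} = α g_{ij}, its associated metric and its inverse
    (gbar gtbar ginvbar : Fin 3 → Fin 3 → Pt → ℝ)
    (hgbar : ∀ i j p, gbar i j p = α p * gm A B i j p)
    (hgtbar : ∀ i j p, gtbar i j p = α p * gt A B i j p)
    (hginvbar : ∀ p ∈ U, ∀ i j, (∑ s, gbar i s p * ginvbar s j p) = if i = j then (1:ℝ) else 0)
    -- the transformed Lee forms
    (θbar θbarStar : Fin 3 → Pt → ℝ)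
    (hθbar : ∀ i p, θbar i p = theta (gm A B) ginv (gt A B) i p
        + (3/(2 * α p)) * ∑ s, PhiMat i s * pd s α p)
    (hθbarStar : ∀ i p, θbarStar i p = -(1/2) * ∑ s, Smat i s * θbar s p) :
    ∀ p ∈ U, ∀ i j k,
      Ften gbar ginvbar gtbar k i j p =
        (1/3) * (gbar k j p * θbar i p + gbar k i p * θbar j p
          + gtbar k j p * θbarStar i p + gtbar k i p * θbarStar j p) :=
  fun p hp => conformal_fundamental_tensor_identity_general
    ((hA.contDiffAt (hU.mem_nhds hp)).differentiableAt (by simp))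
    ((hB.contDiffAt (hU.mem_nhds hp)).differentiableAt (by simp))
    ((hα.contDiffAt (hU.mem_nhds hp)).differentiableAt (by simp))
    (hginv p hp) hgbar hgtbar (hginvbar p hp) (hθbar · p) (hθbarStar · p)
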